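/- Let n, L be positive natural numbers, let l be a natural number with 1 ≤ l < L, let a, b_l, …, b_L ∈ ℝ^n, and suppose the family of vectors (a − b_{l′})_{l′=l}^{L} is linearly independent (so it contains at least two vectors). Then for every x ∈ ℝ^n and every l₀ with l ≤ l₀ ≤ L, the gradient ∇H(x) = (1/L) ∑_{l′=l}^{L} (σ(⟨x, a − b_{l′}⟩) − 1)(a − b_{l′}) of the MNS loss is not a scalar multiple of a − b_{l₀}; in particular it differs in direction from the gradient (σ(⟨x, a − b_{l₀}⟩) − 1)(a − b_{l₀}) of the BPR loss built from the single negative b_{l₀}. -/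

import Mathlib

open scoped RealInnerProductSpace

/-- The logistic sigmoid `σ(x) = 1 / (1 + exp (-x))`. -/
noncomputable def sigmoid (x : ℝ) : ℝ := 1 / (1 + Real.exp (-x))

theorem sigmoid_eq_real_sigmoid (x : ℝ) : sigmoid x = Real.sigmoid x :=
  one_div _

theorem sigmoid_sub_one_ne_zero (x : ℝ) : sigmoid x - 1 ≠ 0 := by
  rw [sigmoid_eq_real_sigmoid]
  exact sub_ne_zero.mpr (Real.sigmoid_lt_one x).ne

theorem sum_smul_notMem_span_singleton_of_linearIndepOn {R M ι : Type*} [Semiring R]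
    [AddCommMonoid M] [Module R M] {v : ι → M} {s : Finset ι} (hv : LinearIndepOn R v s)
    {w : ι → R} {i j : ι} (hi : i ∈ s) (hj : j ∈ s) (hji : j ≠ i) (hw : w j ≠ 0) :
    ∑ k ∈ s, w k • v k ∉ Submodule.span R {v i} := by
  classical
  intro hmem
  obtain ⟨c, hc⟩ := Submodule.mem_span_singleton.mp hmem
  have hsum : ∑ k ∈ s, w k • v k = ∑ k ∈ s, Pi.single (M := fun _ => R) i c k • v k := by
    simp only [Pi.single_apply, ite_smul, zero_smul, Finset.sum_ite_eq', hi, if_true, hc]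
  have hwj : w j = Pi.single (M := fun _ => R) i c j :=
    linearIndepOn_finset_iffₛ.mp hv w (Pi.single i c) hsum j hj
  exact hw (hwj.trans (Pi.single_eq_of_ne hji _))

theorem mns_gradient_not_scalar_multiple_general {E ι : Type*} [SeminormedAddCommGroup E]
    [InnerProductSpace ℝ E] {s : Finset ι} (hs : s.Nontrivial) {r : ℝ} (hr : r ≠ 0)
    {a : E} {b : ι → E} (hind : LinearIndepOn ℝ (fun i => a - b i) s)
    (x : E) {i : ι} (hi : i ∈ s) (c : ℝ) :
    r • ∑ j ∈ s, (sigmoid ⟪x, a - b j⟫ - 1) • (a - b j) ≠ c • (a - b i) := by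
  obtain ⟨k, hk, hki⟩ := hs.exists_ne i
  intro h
  have hmem : r • ∑ j ∈ s, (sigmoid ⟪x, a - b j⟫ - 1) • (a - b j) ∈
      Submodule.span ℝ {a - b i} :=
    Submodule.mem_span_singleton.mpr ⟨c, h.symm⟩
  exact sum_smul_notMem_span_singleton_of_linearIndepOn hind hi hk hki
    (sigmoid_sub_one_ne_zero _) ((Submodule.smul_mem_iff _ hr).mp hmem)

/-- If the difference vectors `(a - b_{l'})_{l'=l}^{L}` are
linearly independent (with `l < L`, so there are at least two of them), then
the gradient of the MNS loss,
`∇H(x) = (1/L) ∑_{l'=l}^{L} (σ(⟪x, a - b_{l'}⟫) - 1) • (a - b_{l'})`, is not a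
scalar multiple of `a - b_{l₀}` for any level `l ≤ l₀ ≤ L`; in particular it
differs in direction from the gradient of the BPR loss built from the single
negative `b_{l₀}`. -/
theorem mns_gradient_not_scalar_multiple (n L l : ℕ)
    (hn : 0 < n) (hL : 0 < L) (hl : 1 ≤ l) (hlL : l < L)
    (a : EuclideanSpace ℝ (Fin n)) (b : ℕ → EuclideanSpace ℝ (Fin n))
    (hind : LinearIndependent ℝ
      (fun l' : (Finset.Icc l L : Finset ℕ) => a - b (l' : ℕ))) :
    ∀ x : EuclideanSpace ℝ (Fin n), ∀ l₀ : ℕ, l ≤ l₀ → l₀ ≤ L →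
      (¬ ∃ c : ℝ,
        (1 / (L : ℝ)) •
            ∑ l' ∈ Finset.Icc l L, (sigmoid ⟪x, a - b l'⟫ - 1) • (a - b l') =
          c • (a - b l₀)) ∧
      (1 / (L : ℝ)) •
          ∑ l' ∈ Finset.Icc l L, (sigmoid ⟪x, a - b l'⟫ - 1) • (a - b l') ≠
        (sigmoid ⟪x, a - b l₀⟫ - 1) • (a - b l₀) := by
  intro x l₀ hl₀ hl₀L
  have hlevels : (Finset.Icc l L).Nontrivial :=
    ⟨l, Finset.left_mem_Icc.mpr hlL.le, L, Finset.right_mem_Icc.mpr hlL.le, hlL.ne⟩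
  have hne := mns_gradient_not_scalar_multiple_general hlevels
    (one_div_ne_zero (Nat.cast_ne_zero.mpr hL.ne')) hind x (Finset.mem_Icc.mpr ⟨hl₀, hl₀L⟩)
  exact ⟨not_exists.mpr hne, hne _⟩
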